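/- Let n, m ≥ 1, let V : ℝ^n × ℝ^m → ℝ be continuous (no sign condition), λ, ε ∈ ℝ, u ∈ C_c^∞(ℝ^n × ℝ^m; ℂ), and f := -Δu - (λ+iε)u + Vu. Then |ε|·‖u‖_X² ≤ 4·( ‖f‖_{X*} + ‖∇_x u‖_X )·‖u‖_{X₁}. -/

import Mathlib

/-!
The proof is the standard localized energy argument. Pairing the equation with `ū` and taking
imaginary parts removes `λ` and `V` and gives the pointwise identity
`ε|u|² = -Im (ū f) - div (Im (ū ∇u))` (`eps_mul_sq`). Multiply by the Lipschitz cutoff `χ`, which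
depends on `|x|` only, equals `1` for `|x| ≤ R`, vanishes for `|x| ≥ 2R`, and has `|∇ₓχ| ≤ 1/R`. After
integration by parts (`LipschitzWith.integral_lineDeriv_mul_eq` handles the Lipschitz regularity)
this yields (`lintegral_eps_le`)

`|ε| ∫_{|x|≤R} |u|² ≤ ∫_{|x|≤2R} |f||u| + R⁻¹ ∫_{|x|≤2R} |∇ₓu||u|`.

Divide by `R`. Cauchy–Schwarz bounds the second term by
`R⁻² (2R)^{1/2} (2R)^{3/2} ‖∇ₓu‖_X ‖u‖_{X₁} = 4 ‖∇ₓu‖_X ‖u‖_{X₁}`. For the first, split into dyadic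
annuli: with `r = 2R`, on the annulus `|x| ~ 2^j` inside `|x| ≤ r` the `L²` norm of `u` is at most
`min (2^j) r ^ (3/2) ‖u‖_{X₁} ≤ r 2^{j/2} ‖u‖_{X₁}`, so the sum is at most `2R ‖f‖_{X*} ‖u‖_{X₁}`
(`lintegral_mul_le_normXstar`). The supremum over `R` finishes the proof. The norms take values in
`[0, ∞]` and may be infinite; every bound is proved in `ℝ≥0∞`, so no finiteness is needed.
-/

open MeasureTheory ENNReal Real

noncomputable section

/-- Points of the waveguide ambient space `ℝ^n × ℝ^m`. -/
abbrev Pt (n m : ℕ) := EuclideanSpace ℝ (Fin n) × EuclideanSpace ℝ (Fin m)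

variable {n m : ℕ}

/-- `L²` norm over a subset of `ℝ^{n+m}`. -/
def L2 {F : Type*} [NormedAddCommGroup F] (f : Pt n m → F) (S : Set (Pt n m)) : ℝ≥0∞ :=
  eLpNorm f 2 (volume.restrict S)

/-- Morrey–Campanato norm `‖f‖_X = sup_{R>0} R^{-1/2} ‖f‖_{L²(|x|≤R)}`. -/
def normX {F : Type*} [NormedAddCommGroup F] (f : Pt n m → F) : ℝ≥0∞ :=
  ⨆ (R : ℝ) (_ : 0 < R), ENNReal.ofReal (R ^ (-(1:ℝ)/2)) * L2 f {p : Pt n m | ‖p.1‖ ≤ R}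

/-- Morrey–Campanato norm `‖f‖_{X₁} = sup_{R>0} R^{-3/2} ‖f‖_{L²(|x|≤R)}`. -/
def normX1 {F : Type*} [NormedAddCommGroup F] (f : Pt n m → F) : ℝ≥0∞ :=
  ⨆ (R : ℝ) (_ : 0 < R), ENNReal.ofReal (R ^ (-(3:ℝ)/2)) * L2 f {p : Pt n m | ‖p.1‖ ≤ R}

/-- Dual Morrey–Campanato norm
`‖f‖_{X*} = Σ_{j∈ℤ} 2^{j/2} ‖f‖_{L²(2^{j-1}≤|x|≤2^j)}`. -/
def normXstar {F : Type*} [NormedAddCommGroup F] (f : Pt n m → F) : ℝ≥0∞ :=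
  ∑' j : ℤ, ENNReal.ofReal ((2:ℝ) ^ ((j:ℝ)/2)) *
    L2 f {p : Pt n m | (2:ℝ)^(j-1) ≤ ‖p.1‖ ∧ ‖p.1‖ ≤ (2:ℝ)^j}

/-- Standard basis vector in the `x` variables. -/
def ex (n m : ℕ) (i : Fin n) : Pt n m := (EuclideanSpace.single i 1, 0)

/-- Standard basis vector in the `y` variables. -/
def ey (n m : ℕ) (i : Fin m) : Pt n m := (0, EuclideanSpace.single i 1)

/-- Laplacian in all `n+m` variables. -/
def lap (u : Pt n m → ℂ) (p : Pt n m) : ℂ :=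
  (∑ i : Fin n, fderiv ℝ (fun q => fderiv ℝ u q (ex n m i)) p (ex n m i)) +
  ∑ i : Fin m, fderiv ℝ (fun q => fderiv ℝ u q (ey n m i)) p (ey n m i)

/-- Pointwise euclidean norm of the gradient in the `x` variables only. -/
def gradXnorm (u : Pt n m → ℂ) (p : Pt n m) : ℝ :=
  Real.sqrt (∑ i : Fin n, ‖fderiv ℝ u p (ex n m i)‖^2)

/-- Pointwise squared euclidean norm of the full gradient. -/
def gradNormSq (u : Pt n m → ℂ) (p : Pt n m) : ℝ :=
  (∑ i : Fin n, ‖fderiv ℝ u p (ex n m i)‖^2) +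
  ∑ i : Fin m, ‖fderiv ℝ u p (ey n m i)‖^2

/-- The right hand side `f := -Δu - (λ+iε)u + Vu` of the resolvent equation. -/
def resf (V : Pt n m → ℝ) (lam eps : ℝ) (u : Pt n m → ℂ) : Pt n m → ℂ :=
  fun p => -lap u p - (lam + eps * Complex.I) * u p + (V p : ℂ) * u p

/-- A repulsive potential: nonnegative, continuous, `C¹` in `x` for `x ≠ 0`, and
`x·∇ₓ(|x| V) ≤ 0` for `x ≠ 0`. -/
structure IsRepulsive (V : Pt n m → ℝ) : Prop where
  nonneg : ∀ p, 0 ≤ V p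
  continuous : Continuous V
  cdiff : ∀ y : EuclideanSpace ℝ (Fin m), ContDiffOn ℝ 1 (fun x => V (x, y)) {x | x ≠ 0}
  repulsive : ∀ (x : EuclideanSpace ℝ (Fin n)) (y : EuclideanSpace ℝ (Fin m)), x ≠ 0 →
    fderiv ℝ (fun x' : EuclideanSpace ℝ (Fin n) => ‖x'‖ * V (x', y)) x x ≤ 0

/-! ### The cutoff -/

/-- Lipschitz cutoff in the `x` variables: `1` for `|x| ≤ R`, `0` for `|x| ≥ 2R`, and affine in `|x|`
in between, so that its Lipschitz constant is exactly `1/R`. -/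
def cutoff (R : ℝ) (p : Pt n m) : ℝ := max 0 (min 1 (2 - ‖p.1‖ / R))

lemma cutoff_nonneg (R : ℝ) (p : Pt n m) : 0 ≤ cutoff R p := le_max_left _ _

lemma cutoff_le_one (R : ℝ) (p : Pt n m) : cutoff R p ≤ 1 :=
  max_le zero_le_one (min_le_left _ _)

lemma cutoff_eq_one {R : ℝ} (hR : 0 < R) {p : Pt n m} (hp : ‖p.1‖ ≤ R) : cutoff R p = 1 := by
  have : ‖p.1‖ / R ≤ 1 := (div_le_one hR).2 hp
  unfold cutoff
  rw [min_eq_left (by linarith), max_eq_right zero_le_one]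

lemma cutoff_eq_zero {R : ℝ} (hR : 0 < R) {p : Pt n m} (hp : 2 * R < ‖p.1‖) :
    cutoff R p = 0 := by
  have : 2 ≤ ‖p.1‖ / R := (le_div_iff₀ hR).2 hp.le
  exact max_eq_left ((min_le_right _ _).trans (by linarith))

lemma cutoff_lipschitz {R : ℝ} (hR : 0 < R) :
    LipschitzWith (R⁻¹).toNNReal (cutoff (n := n) (m := m) R) := by
  refine LipschitzWith.of_dist_le_mul fun p q => ?_
  rw [Real.coe_toNNReal _ (inv_nonneg.2 hR.le), Real.dist_eq, dist_eq_norm]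
  have h1 : |cutoff R p - cutoff R q| ≤ |(2 - ‖p.1‖ / R) - (2 - ‖q.1‖ / R)| := by
    unfold cutoff
    refine (abs_max_sub_max_le_max _ _ _ _).trans ?_
    rw [sub_self, abs_zero, max_eq_right (abs_nonneg _)]
    refine (abs_min_sub_min_le_max _ _ _ _).trans ?_
    rw [sub_self, abs_zero, max_eq_right (abs_nonneg _)]
  have h2 : (2 - ‖p.1‖ / R) - (2 - ‖q.1‖ / R) = R⁻¹ * (‖q.1‖ - ‖p.1‖) := by
    field_simp; ring
  rw [h2, abs_mul, abs_of_pos (inv_pos.2 hR)] at h1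
  refine h1.trans (mul_le_mul_of_nonneg_left ?_ (inv_nonneg.2 hR.le))
  rw [abs_sub_comm]
  exact (abs_norm_sub_norm_le _ _).trans (norm_fst_le (p - q))

lemma lineDeriv_cutoff_ey (R : ℝ) (p : Pt n m) (i : Fin m) :
    lineDeriv ℝ (cutoff R) p (ey n m i) = 0 := by
  simp [lineDeriv, cutoff, ey]

/-- The euclidean bound `|∇ₓ (cutoff R) · c| ≤ |c| / R`. The sup norm on the product `Pt n m` does no
harm, since `(c, 0)` has norm `|c|`. -/
lemma abs_sum_lineDeriv_cutoff_le {R : ℝ} (hR : 0 < R) {p : Pt n m}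
    (hp : DifferentiableAt ℝ (cutoff R) p) (c : Fin n → ℝ) :
    |∑ i, lineDeriv ℝ (cutoff R) p (ex n m i) * c i| ≤
      {p : Pt n m | ‖p.1‖ ≤ 2 * R}.indicator (fun _ => R⁻¹ * √(∑ i, c i ^ 2)) p := by
  by_cases h : p ∈ {p : Pt n m | ‖p.1‖ ≤ 2 * R}
  · rw [Set.indicator_of_mem h]
    have hsum : ∑ i, lineDeriv ℝ (cutoff R) p (ex n m i) * c i
        = fderiv ℝ (cutoff R) p (WithLp.toLp 2 c, 0) := by
      have : ((WithLp.toLp 2 c, 0) : Pt n m) = ∑ i, c i • ex n m i := by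
        ext j
        · simp [ex, Prod.fst_sum, Finset.sum_apply, Pi.single_apply]
        · simp [ex, Prod.snd_sum]
      rw [this, map_sum]
      refine Finset.sum_congr rfl fun i _ => ?_
      rw [hp.lineDeriv_eq_fderiv, map_smul, smul_eq_mul, mul_comm]
    rw [hsum, ← Real.norm_eq_abs]
    have h1 := (fderiv ℝ (cutoff R) p).le_of_opNorm_le
      (norm_fderiv_le_of_lipschitz ℝ (cutoff_lipschitz hR)) (WithLp.toLp 2 c, 0)
    refine h1.trans (le_of_eq ?_)
    rw [Real.coe_toNNReal _ (inv_nonneg.2 hR.le), Prod.norm_mk, norm_zero,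
      max_eq_left (norm_nonneg _), EuclideanSpace.norm_eq]
    simp
  · rw [Set.indicator_of_notMem h]
    have hlt : 2 * R < ‖p.1‖ := not_le.1 h
    have hev : cutoff R =ᶠ[nhds p] fun _ => (0 : ℝ) := by
      have : ∀ᶠ q : Pt n m in nhds p, 2 * R < ‖q.1‖ :=
        continuous_fst.norm.continuousAt.eventually (lt_mem_nhds hlt)
      filter_upwards [this] with q hq using cutoff_eq_zero hR hq
    have h0 : fderiv ℝ (cutoff R) p = 0 := by rw [hev.fderiv_eq]; simp
    simp [hp.lineDeriv_eq_fderiv, h0]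

/-! ### Currents and the truncated energy identity -/

/-- The current `Im (ū ∂ₑu)` in the direction `e`, at the point `p`. -/
def curr (u : Pt n m → ℂ) (e p : Pt n m) : ℝ :=
  ((starRingEnd ℂ) (u p) * fderiv ℝ u p e).im

section
variable {u : Pt n m → ℂ}

lemma contDiff_fderiv_apply (hu : ContDiff ℝ (⊤ : ℕ∞) u) (e : Pt n m) :
    ContDiff ℝ (⊤ : ℕ∞) (fun q => fderiv ℝ u q e) :=
  (hu.fderiv_right (m := (⊤ : ℕ∞)) (by simp)).clm_apply contDiff_const

lemma contDiff_curr (hu : ContDiff ℝ (⊤ : ℕ∞) u) (e : Pt n m) :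
    ContDiff ℝ (⊤ : ℕ∞) (curr u e) := by
  have h1 : ContDiff ℝ (⊤ : ℕ∞) (fun p => (starRingEnd ℂ) (u p)) :=
    Complex.conjCLE.contDiff.comp hu
  exact Complex.imCLM.contDiff.comp (h1.mul (contDiff_fderiv_apply hu e))

lemma hasCompactSupport_curr (hs : HasCompactSupport u) (e : Pt n m) :
    HasCompactSupport (curr u e) :=
  hs.mono' (fun p hp => subset_closure (fun h0 => hp (by simp [curr, h0])))

/-- The term `|∂ₑu|²` of the product rule is real, so only the second derivative of `u` remains. -/
lemma fderiv_curr (hu : ContDiff ℝ (⊤ : ℕ∞) u) (e p : Pt n m) :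
    fderiv ℝ (curr u e) p e =
      ((starRingEnd ℂ) (u p) * fderiv ℝ (fun q => fderiv ℝ u q e) p e).im := by
  have h1 : HasFDerivAt u (fderiv ℝ u p) p :=
    (hu.differentiable (by simp) p).hasFDerivAt
  have h2 : HasFDerivAt (fun q => fderiv ℝ u q e) (fderiv ℝ (fun q => fderiv ℝ u q e) p) p :=
    ((contDiff_fderiv_apply hu e).differentiable (by simp) p).hasFDerivAt
  have h3 : HasFDerivAt (fun q => (starRingEnd ℂ) (u q))
      ((Complex.conjCLE : ℂ →L[ℝ] ℂ).comp (fderiv ℝ u p)) p :=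
    Complex.conjCLE.hasFDerivAt.comp p h1
  have h4 := Complex.imCLM.hasFDerivAt.comp p (h3.mul h2)
  have h5 : HasFDerivAt (curr u e) _ p := h4
  rw [h5.fderiv]
  simp
  ring

lemma sq_sum_curr_le (p : Pt n m) :
    √(∑ i, curr u (ex n m i) p ^ 2) ≤ ‖u p‖ * gradXnorm u p := by
  rw [gradXnorm, ← Real.sqrt_sq (norm_nonneg (u p)), ← Real.sqrt_mul (sq_nonneg _),
    Finset.mul_sum]
  refine Real.sqrt_le_sqrt (Finset.sum_le_sum fun i _ => ?_)
  rw [← mul_pow, ← sq_abs]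
  refine pow_le_pow_left₀ (abs_nonneg _) ((Complex.abs_im_le_norm _).trans ?_) 2
  simp

/-- The imaginary part of `ū f`: `ε|u|² = -Im (ū f) - div (Im (ū ∇u))`. The real quantities `λ` and
`V` drop out. -/
lemma eps_mul_sq (hu : ContDiff ℝ (⊤ : ℕ∞) u) (V : Pt n m → ℝ) (lam eps : ℝ) (p : Pt n m) :
    eps * ‖u p‖ ^ 2 = -((starRingEnd ℂ) (u p) * resf V lam eps u p).im
      + ((∑ i, -fderiv ℝ (curr u (ex n m i)) p (ex n m i))
      + ∑ i, -fderiv ℝ (curr u (ey n m i)) p (ey n m i)) := by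
  simp only [fderiv_curr hu, Finset.sum_neg_distrib, ← Complex.im_sum, ← Finset.mul_sum]
  rw [← neg_add, ← Complex.add_im, ← mul_add]
  change _ = _ + -((starRingEnd ℂ) (u p) * lap u p).im
  rw [resf, ← Complex.normSq_eq_norm_sq, Complex.normSq_apply]
  simp
  ring

lemma continuous_resf (hu : ContDiff ℝ (⊤ : ℕ∞) u) {V : Pt n m → ℝ} (hV : Continuous V)
    (lam eps : ℝ) : Continuous (resf V lam eps u) := by
  have h : ∀ e : Pt n m, Continuous fun p => fderiv ℝ (fun q => fderiv ℝ u q e) p e := fun e =>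
    (contDiff_fderiv_apply (contDiff_fderiv_apply hu e) e).continuous
  have h1 : Continuous (lap u) :=
    (continuous_finsetSum _ fun i _ => h _).add (continuous_finsetSum _ fun i _ => h _)
  have := hu.continuous
  unfold resf
  fun_prop

lemma continuous_gradXnorm (hu : ContDiff ℝ (⊤ : ℕ∞) u) : Continuous (gradXnorm u) :=
  (continuous_finsetSum _ fun _ _ => (contDiff_fderiv_apply hu _).continuous.norm.pow 2).sqrt

instance isAddHaarMeasure_volume_pt : (volume : Measure (Pt n m)).IsAddHaarMeasure :=
  inferInstanceAs (((volume : Measure (EuclideanSpace ℝ (Fin n))).prod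
    (volume : Measure (EuclideanSpace ℝ (Fin m)))).IsAddHaarMeasure)

/-- Integration by parts against the cutoff, which is only Lipschitz. -/
lemma integral_lineDeriv_cutoff_mul {R : ℝ} (hR : 0 < R) {g : Pt n m → ℝ}
    (hg : ContDiff ℝ (⊤ : ℕ∞) g) (hs : HasCompactSupport g) (e : Pt n m) :
    ∫ p, cutoff R p * -fderiv ℝ g p e = ∫ p, lineDeriv ℝ (cutoff R) p e * g p := by
  obtain ⟨D, hD⟩ := ContDiff.lipschitzWith_of_hasCompactSupport hs hg (by simp)
  rw [(cutoff_lipschitz hR).integral_lineDeriv_mul_eq hD hs]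
  refine integral_congr_ae (.of_forall fun p => ?_)
  simp only
  rw [(hg.differentiable (by simp) p).lineDeriv_eq_fderiv, map_neg, mul_comm]

lemma integrable_lineDeriv_cutoff_mul {R : ℝ} (hR : 0 < R) {g : Pt n m → ℝ}
    (hg : Continuous g) (hs : HasCompactSupport g) (e : Pt n m) :
    Integrable fun p => lineDeriv ℝ (cutoff R) p e * g p :=
  ((cutoff_lipschitz hR).locallyIntegrable_lineDeriv e).integrable_smul_right_of_hasCompactSupport
    hg hs

/-- The identity `eps_mul_sq` integrated against the cutoff. Only the currents in the `x` directions
survive, as the cutoff does not depend on `y`. -/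
lemma integral_eps {R : ℝ} (hR : 0 < R) (hu : ContDiff ℝ (⊤ : ℕ∞) u) (hs : HasCompactSupport u)
    {V : Pt n m → ℝ} (hV : Continuous V) (lam eps : ℝ) :
    ∫ p, cutoff R p * (eps * ‖u p‖ ^ 2) =
      ∫ p, (cutoff R p * -((starRingEnd ℂ) (u p) * resf V lam eps u p).im
        + ∑ i, lineDeriv ℝ (cutoff R) p (ex n m i) * curr u (ex n m i) p) := by
  have hc : Continuous (cutoff (n := n) (m := m) R) := (cutoff_lipschitz hR).continuous
  have hI1 : Integrable fun p : Pt n m =>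
      cutoff R p * -((starRingEnd ℂ) (u p) * resf V lam eps u p).im := by
    refine Continuous.integrable_of_hasCompactSupport ?_ ?_
    · have := hu.continuous
      have := continuous_resf hu hV lam eps
      exact hc.mul (Complex.continuous_im.comp ((Complex.continuous_conj.comp ‹_›).mul ‹_›)).neg
    · exact hs.mono' (fun p hp => subset_closure (fun h0 => hp (by simp [h0])))
  have hI2 : ∀ e, Integrable fun p : Pt n m => cutoff R p * -fderiv ℝ (curr u e) p e := by
    intro e
    refine Continuous.integrable_of_hasCompactSupport ?_ ?_
    · exact hc.mul (((contDiff_curr hu e).continuous_fderiv (by simp)).clm_apply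
        continuous_const).neg
    · have h := (hasCompactSupport_curr hs e).fderiv_apply ℝ e
      exact h.mono (fun p hp h0 => hp (by simp [h0]))
  have hI3 := fun e => integrable_lineDeriv_cutoff_mul hR (contDiff_curr hu e).continuous
    (hasCompactSupport_curr hs e) e
  simp only [eps_mul_sq hu V lam eps, mul_add, Finset.mul_sum]
  have hX := integrable_finsetSum Finset.univ fun i _ => hI2 (ex n m i)
  have hY := integrable_finsetSum Finset.univ fun i _ => hI2 (ey n m i)
  rw [integral_add hI1 (by exact hX.add hY), integral_add hX hY,
    integral_add hI1 (integrable_finsetSum _ fun i _ => hI3 _),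
    integral_finsetSum _ fun i _ => hI2 _, integral_finsetSum _ fun i _ => hI2 _,
    integral_finsetSum _ fun i _ => hI3 _]
  simp only [integral_lineDeriv_cutoff_mul hR (contDiff_curr hu _) (hasCompactSupport_curr hs _),
    lineDeriv_cutoff_ey]
  simp

end

/-! ### Morrey–Campanato norms and duality -/

/-- Cauchy–Schwarz on `S`. -/
lemma lintegral_mul_le_L2 {F G : Type*} [NormedAddCommGroup F] [NormedAddCommGroup G]
    {f : Pt n m → F} {g : Pt n m → G} (hf : Continuous f) (hg : Continuous g)
    (S : Set (Pt n m)) :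
    ∫⁻ p in S, ‖f p‖ₑ * ‖g p‖ₑ ≤ L2 f S * L2 g S := by
  have h := ENNReal.lintegral_mul_le_Lp_mul_Lq (volume.restrict S)
    Real.HolderConjugate.two_two hf.enorm.aemeasurable hg.enorm.aemeasurable
  simpa [L2, eLpNorm_eq_lintegral_rpow_enorm_toReal two_ne_zero ENNReal.ofNat_ne_top] using h

lemma L2_sq {F : Type*} [NormedAddCommGroup F] (f : Pt n m → F) (S : Set (Pt n m)) :
    L2 f S ^ 2 = ∫⁻ p in S, ‖f p‖ₑ ^ 2 := by
  rw [L2, eLpNorm_eq_lintegral_rpow_enorm_toReal two_ne_zero ENNReal.ofNat_ne_top,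
    ← ENNReal.rpow_natCast, ← ENNReal.rpow_mul]
  simp

lemma L2_mono {F : Type*} [NormedAddCommGroup F] (f : Pt n m → F) {S T : Set (Pt n m)}
    (h : S ⊆ T) : L2 f S ≤ L2 f T :=
  eLpNorm_mono_measure _ (Measure.restrict_mono h le_rfl)

lemma le_ofReal_rpow_mul {R : ℝ} (hR : 0 < R) (a : ℝ) {x y : ℝ≥0∞}
    (h : ENNReal.ofReal (R ^ (-a)) * x ≤ y) : x ≤ ENNReal.ofReal (R ^ a) * y := by
  calc x = ENNReal.ofReal (R ^ a) * (ENNReal.ofReal (R ^ (-a)) * x) := by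
        rw [← mul_assoc, ← ENNReal.ofReal_mul (by positivity), ← Real.rpow_add hR]
        simp
    _ ≤ _ := by gcongr

lemma L2_le_normX {F : Type*} [NormedAddCommGroup F] (f : Pt n m → F) {R : ℝ} (hR : 0 < R) :
    L2 f {p : Pt n m | ‖p.1‖ ≤ R} ≤ ENNReal.ofReal (R ^ ((1:ℝ)/2)) * normX f := by
  refine le_ofReal_rpow_mul hR _ ?_
  rw [← neg_div]
  exact le_iSup₂ (f := fun (R : ℝ) (_ : 0 < R) =>
    ENNReal.ofReal (R ^ (-(1:ℝ)/2)) * L2 f {p : Pt n m | ‖p.1‖ ≤ R}) R hR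

lemma L2_le_normX1 {F : Type*} [NormedAddCommGroup F] (f : Pt n m → F) {R : ℝ} (hR : 0 < R) :
    L2 f {p : Pt n m | ‖p.1‖ ≤ R} ≤ ENNReal.ofReal (R ^ ((3:ℝ)/2)) * normX1 f := by
  refine le_ofReal_rpow_mul hR _ ?_
  rw [← neg_div]
  exact le_iSup₂ (f := fun (R : ℝ) (_ : 0 < R) =>
    ENNReal.ofReal (R ^ (-(3:ℝ)/2)) * L2 f {p : Pt n m | ‖p.1‖ ≤ R}) R hR

/-- The factor `min (2^j) r ^ (3/2)` produced by `‖u‖_{X₁}` on the part of the `j`-th annulus inside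
`|x| ≤ r` is absorbed by the weight `2^{j/2}` of `‖f‖_{X*}` at the price of one factor `r`. -/
lemma rpow_three_half_min_le {a b : ℝ} (ha : 0 < a) (hb : 0 < b) :
    min a b ^ ((3:ℝ)/2) ≤ b * a ^ ((1:ℝ)/2) := by
  have hm : 0 < min a b := lt_min ha hb
  rw [show (3:ℝ)/2 = 1 + 1/2 by norm_num, Real.rpow_add hm, Real.rpow_one]
  gcongr
  · exact min_le_right _ _
  · exact min_le_left _ _

lemma volume_fst_eq_zero (hn : 1 ≤ n) : volume {p : Pt n m | p.1 = 0} = 0 := by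
  have : Nonempty (Fin n) := ⟨⟨0, hn⟩⟩
  have h : {p : Pt n m | p.1 = 0} = {0} ×ˢ Set.univ := by ext p; simp
  rw [h, Measure.volume_eq_prod, Measure.prod_prod, measure_singleton, zero_mul]

/-- Duality between `X*` and `X₁` on `|x| ≤ r`: the dyadic annuli cover everything except the null
set `x = 0`, and Cauchy–Schwarz is applied on each of them. -/
lemma lintegral_mul_le_normXstar (hn : 1 ≤ n) {f u : Pt n m → ℂ} (hf : Continuous f)
    (hu : Continuous u) {r : ℝ} (hr : 0 < r) :
    ∫⁻ p in {p : Pt n m | ‖p.1‖ ≤ r}, ‖f p‖ₑ * ‖u p‖ₑ ≤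
      ENNReal.ofReal r * (normXstar f * normX1 u) := by
  set A : ℤ → Set (Pt n m) := fun j => {p | (2:ℝ)^(j-1) ≤ ‖p.1‖ ∧ ‖p.1‖ ≤ (2:ℝ)^j} with hA
  set B : Set (Pt n m) := {p | ‖p.1‖ ≤ r} with hB
  have hcover : B ≤ᵐ[volume] (⋃ j, A j ∩ B : Set (Pt n m)) := by
    have h0 : ∀ᵐ p : Pt n m, p.1 ≠ 0 := by
      rw [ae_iff]; simpa using volume_fst_eq_zero (m := m) hn
    filter_upwards [h0] with p hp hpB
    obtain ⟨k, hk⟩ := exists_mem_Ioc_zpow (norm_pos_iff.2 hp) (one_lt_two (α := ℝ))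
    refine Set.mem_iUnion.2 ⟨k + 1, ⟨?_, hk.2⟩, hpB⟩
    simpa using hk.1.le
  have hpiece : ∀ j : ℤ, ∫⁻ p in A j ∩ B, ‖f p‖ₑ * ‖u p‖ₑ ≤
      ENNReal.ofReal r * normX1 u * (ENNReal.ofReal ((2:ℝ) ^ ((j:ℝ)/2)) * L2 f (A j)) := by
    intro j
    have h2 : (0:ℝ) < 2 ^ j := by positivity
    have hu1 : L2 u (A j ∩ B) ≤
        ENNReal.ofReal (r * (2:ℝ) ^ ((j:ℝ)/2)) * normX1 u := by
      refine (L2_mono u (T := {p | ‖p.1‖ ≤ min ((2:ℝ)^j) r})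
        fun p hp => le_min hp.1.2 hp.2).trans ((L2_le_normX1 u (lt_min h2 hr)).trans ?_)
      gcongr
      refine (rpow_three_half_min_le h2 hr).trans (le_of_eq ?_)
      rw [← Real.rpow_intCast, ← Real.rpow_mul zero_le_two]
      ring_nf
    calc _ ≤ L2 f (A j ∩ B) * L2 u (A j ∩ B) := lintegral_mul_le_L2 hf hu _
      _ ≤ L2 f (A j) * (ENNReal.ofReal (r * (2:ℝ) ^ ((j:ℝ)/2)) * normX1 u) := by
        gcongr
        exact L2_mono f Set.inter_subset_left
      _ = _ := by rw [ENNReal.ofReal_mul hr.le]; ring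
  calc ∫⁻ p in B, ‖f p‖ₑ * ‖u p‖ₑ
      ≤ ∫⁻ p in ⋃ j, A j ∩ B, ‖f p‖ₑ * ‖u p‖ₑ := lintegral_mono_set' hcover
    _ ≤ ∑' j, ∫⁻ p in A j ∩ B, ‖f p‖ₑ * ‖u p‖ₑ := lintegral_iUnion_le _ _
    _ ≤ ∑' j : ℤ, ENNReal.ofReal r * normX1 u *
        (ENNReal.ofReal ((2:ℝ) ^ ((j:ℝ)/2)) * L2 f (A j)) := ENNReal.tsum_le_tsum hpiece
    _ = _ := by rw [ENNReal.tsum_mul_left, normXstar]; ring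

/-! ### The localized estimate -/

/-- The localized energy estimate: the truncated identity `integral_eps` with `cutoff R = 1` on
`|x| ≤ R` on the left, and `cutoff R ≤ 1`, `|∇ₓ (cutoff R)| ≤ 1/R`, both supported in `|x| ≤ 2R`, on
the right. -/
lemma lintegral_eps_le {u : Pt n m → ℂ} {R : ℝ} (hR : 0 < R) (hu : ContDiff ℝ (⊤ : ℕ∞) u)
    (hs : HasCompactSupport u) {V : Pt n m → ℝ} (hV : Continuous V) (lam eps : ℝ) :
    ENNReal.ofReal |eps| * ∫⁻ p in {p : Pt n m | ‖p.1‖ ≤ R}, ‖u p‖ₑ ^ 2 ≤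
      (∫⁻ p in {p : Pt n m | ‖p.1‖ ≤ 2 * R}, ‖resf V lam eps u p‖ₑ * ‖u p‖ₑ) +
      ENNReal.ofReal R⁻¹ *
        ∫⁻ p in {p : Pt n m | ‖p.1‖ ≤ 2 * R}, ‖gradXnorm u p‖ₑ * ‖u p‖ₑ := by
  have hcl : ∀ r : ℝ, MeasurableSet {p : Pt n m | ‖p.1‖ ≤ r} := fun r =>
    (isClosed_le continuous_fst.norm continuous_const).measurableSet
  have hc : Continuous (cutoff (n := n) (m := m) R) := (cutoff_lipschitz hR).continuous
  have huc := hu.continuous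
  have hfc := continuous_resf hu hV lam eps
  have hgc := continuous_gradXnorm hu
  have hleft : ENNReal.ofReal |eps| * ∫⁻ p in {p : Pt n m | ‖p.1‖ ≤ R}, ‖u p‖ₑ ^ 2 ≤
      ‖∫ p, cutoff R p * (eps * ‖u p‖ ^ 2)‖ₑ := by
    have hI : Integrable fun p => cutoff R p * ‖u p‖ ^ 2 := by
      refine Continuous.integrable_of_hasCompactSupport (by fun_prop) ?_
      exact hs.mono' (fun p hp => subset_closure (fun h0 => hp (by simp [h0])))
    have h1 : ∫ p, cutoff R p * (eps * ‖u p‖ ^ 2) = eps * ∫ p, cutoff R p * ‖u p‖ ^ 2 := by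
      rw [← integral_const_mul]; congr 1; ext p; ring
    have hnn : ∀ p, 0 ≤ cutoff R p * ‖u p‖ ^ 2 := fun p =>
      mul_nonneg (cutoff_nonneg _ _) (sq_nonneg _)
    rw [h1, enorm_mul, Real.enorm_eq_ofReal_abs,
      Real.enorm_of_nonneg (integral_nonneg hnn),
      ofReal_integral_eq_lintegral_ofReal hI (.of_forall hnn), ← lintegral_indicator (hcl R)]
    refine mul_le_mul_right (lintegral_mono fun p => ?_) _
    by_cases hp : p ∈ {p : Pt n m | ‖p.1‖ ≤ R}
    · rw [Set.indicator_of_mem hp, cutoff_eq_one hR hp, one_mul,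
        ENNReal.ofReal_pow (norm_nonneg _), ofReal_norm]
    · rw [Set.indicator_of_notMem hp]
      exact zero_le
  refine hleft.trans ?_
  rw [integral_eps hR hu hs hV lam eps]
  refine (enorm_integral_le_lintegral_enorm _).trans ?_
  have hm : Measurable fun p => ‖resf V lam eps u p‖ₑ * ‖u p‖ₑ :=
    hfc.enorm.measurable.mul huc.enorm.measurable
  rw [← lintegral_const_mul' _ _ ENNReal.ofReal_ne_top,
    ← lintegral_add_left hm, ← lintegral_indicator (hcl _)]
  refine lintegral_mono_ae ?_
  filter_upwards [(cutoff_lipschitz (n := n) (m := m) hR).ae_differentiableAt] with p hp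
  have hb := abs_sum_lineDeriv_cutoff_le hR hp (fun i => curr u (ex n m i) p)
  by_cases hpB : p ∈ {p : Pt n m | ‖p.1‖ ≤ 2 * R}
  · rw [Set.indicator_of_mem hpB] at hb ⊢
    refine (enorm_add_le _ _).trans (add_le_add ?_ ?_)
    · rw [← enorm_mul, enorm_le_iff_norm_le, norm_mul, norm_neg, Real.norm_eq_abs, Real.norm_eq_abs,
        abs_of_nonneg (cutoff_nonneg _ _)]
      refine (mul_le_of_le_one_left (abs_nonneg _) (cutoff_le_one _ _)).trans
        ((Complex.abs_im_le_norm _).trans (le_of_eq ?_))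
      rw [norm_mul, norm_mul, RCLike.norm_conj, mul_comm]
    · rw [← ofReal_norm, ← ofReal_norm, ← ofReal_norm,
        ← ENNReal.ofReal_mul (norm_nonneg _), ← ENNReal.ofReal_mul (inv_nonneg.2 hR.le)]
      refine ENNReal.ofReal_le_ofReal (hb.trans ?_)
      refine mul_le_mul_of_nonneg_left ((sq_sum_curr_le p).trans (le_of_eq ?_))
        (inv_nonneg.2 hR.le)
      rw [Real.norm_of_nonneg (show 0 ≤ gradXnorm u p from Real.sqrt_nonneg _), mul_comm]
  · rw [Set.indicator_of_notMem hpB] at hb ⊢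
    rw [abs_nonpos_iff.1 hb, cutoff_eq_zero hR (not_le.1 hpB)]
    simp

/-- The estimate at a fixed radius. The constant `4` is `R⁻² (2R)^{1/2} (2R)^{3/2}`, from the gradient
term; the other term only needs `2 = R⁻¹ (2R)`. -/
lemma eps_estimate_radius (hn : 1 ≤ n) {u : Pt n m → ℂ} {R : ℝ} (hR : 0 < R)
    (hu : ContDiff ℝ (⊤ : ℕ∞) u) (hs : HasCompactSupport u) {V : Pt n m → ℝ}
    (hV : Continuous V) (lam eps : ℝ) :
    ENNReal.ofReal |eps| *
        (ENNReal.ofReal (R ^ (-(1:ℝ)/2)) * L2 u {p : Pt n m | ‖p.1‖ ≤ R}) ^ 2 ≤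
      4 * (normXstar (resf V lam eps u) + normX (fun p => gradXnorm u p)) * normX1 u := by
  have h2R : 0 < 2 * R := by positivity
  have hpow : ENNReal.ofReal (R ^ (-(1:ℝ)/2)) ^ 2 = ENNReal.ofReal R⁻¹ := by
    rw [← ENNReal.ofReal_pow (by positivity), ← Real.rpow_natCast, ← Real.rpow_mul hR.le,
      ← Real.rpow_neg_one]
    norm_num
  have hgrad : ∫⁻ p in {p : Pt n m | ‖p.1‖ ≤ 2 * R}, ‖gradXnorm u p‖ₑ * ‖u p‖ₑ ≤
      ENNReal.ofReal ((2 * R) ^ 2) * (normX (gradXnorm u) * normX1 u) := by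
    refine (lintegral_mul_le_L2 (continuous_gradXnorm hu) hu.continuous _).trans ?_
    refine (mul_le_mul' (L2_le_normX _ h2R) (L2_le_normX1 u h2R)).trans (le_of_eq ?_)
    rw [mul_mul_mul_comm, ← ENNReal.ofReal_mul (by positivity), ← Real.rpow_add h2R,
      ← Real.rpow_natCast]
    norm_num
  have hf := lintegral_mul_le_normXstar hn (continuous_resf hu hV lam eps) hu.continuous h2R
  calc _ = ENNReal.ofReal R⁻¹ *
        (ENNReal.ofReal |eps| * ∫⁻ p in {p : Pt n m | ‖p.1‖ ≤ R}, ‖u p‖ₑ ^ 2) := by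
        rw [mul_pow, L2_sq, hpow]; ring
    _ ≤ ENNReal.ofReal R⁻¹ *
        (ENNReal.ofReal (2 * R) * (normXstar (resf V lam eps u) * normX1 u) +
        ENNReal.ofReal R⁻¹ *
          (ENNReal.ofReal ((2 * R) ^ 2) * (normX (gradXnorm u) * normX1 u))) := by
        refine mul_le_mul_right ((lintegral_eps_le hR hu hs hV lam eps).trans ?_) _
        gcongr
    _ = 2 * (normXstar (resf V lam eps u) * normX1 u) +
        4 * (normX (gradXnorm u) * normX1 u) := by
        have e1 : ENNReal.ofReal R⁻¹ * ENNReal.ofReal (2 * R) = 2 := by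
          rw [← ENNReal.ofReal_mul (by positivity),
            show R⁻¹ * (2 * R) = 2 by field_simp, ENNReal.ofReal_ofNat]
        have e2 : ENNReal.ofReal R⁻¹ * (ENNReal.ofReal R⁻¹ * ENNReal.ofReal ((2 * R) ^ 2)) = 4 := by
          rw [← ENNReal.ofReal_mul (by positivity), ← ENNReal.ofReal_mul (by positivity),
            show R⁻¹ * (R⁻¹ * (2 * R) ^ 2) = 4 by field_simp; norm_num, ENNReal.ofReal_ofNat]
        rw [mul_add, ← mul_assoc, e1, ← e2]
        ring
    _ ≤ 4 * (normXstar (resf V lam eps u) * normX1 u) +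
        4 * (normX (gradXnorm u) * normX1 u) := by
        gcongr
        norm_num
    _ = _ := by ring

/-- the estimate `|ε|‖u‖_X² ≤ 4(‖f‖_{X*} + ‖∇ₓu‖_X)‖u‖_{X₁}`. -/
theorem eps_estimate (n m : ℕ) (hn : 1 ≤ n) (hm : 1 ≤ m)
    (V : Pt n m → ℝ) (hV : Continuous V)
    (lam eps : ℝ) (u : Pt n m → ℂ)
    (hu : ContDiff ℝ (⊤ : ℕ∞) u) (hsupp : HasCompactSupport u) :
    ENNReal.ofReal |eps| * normX u ^ 2 ≤
      4 * (normXstar (resf V lam eps u) + normX (fun p => gradXnorm u p)) * normX1 u := by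
  have key := fun (R : ℝ) (hR : 0 < R) => eps_estimate_radius hn hR hu hsupp hV lam eps
  have hsq : normX u ^ 2 = ⨆ (R : ℝ) (_ : 0 < R),
      (ENNReal.ofReal (R ^ (-(1:ℝ)/2)) * L2 u {p : Pt n m | ‖p.1‖ ≤ R}) ^ 2 := by
    simp only [normX, ENNReal.iSup_pow_of_ne_zero two_ne_zero]
  rw [hsq]
  simp only [ENNReal.mul_iSup]
  exact iSup₂_le key
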